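/- arXiv:2411.05443 — 2 statements merged into one kernel-verified Lean document; each statement's English description precedes it below -/
import Mathlib

section
/- Let (X, d) be a metric space, let S be a subset of X, and let 𝒞 and 𝒟 be two partitions of S such that every block of 𝒞 and every block of 𝒟 has diameter at most δ (for some δ ≥ 0). Then for every block C of 𝒞, the image of C in 𝒟, i.e. the union of all blocks D of 𝒟 with C ∩ D ≠ ∅, has diameter at most 3δ. -/
/-- A collection `P` of subsets of `X` is a partition of the set `S` if its blocks are
nonempty, pairwise disjoint, and their union is `S`. -/
def IsPartitionOf {X : Type*} (S : Set X) (P : Set (Set X)) : Prop :=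
  (∀ A ∈ P, A.Nonempty) ∧
  (∀ A ∈ P, ∀ B ∈ P, A ≠ B → Disjoint A B) ∧
  ⋃₀ P = S

section PseudoEMetricSpace

variable {X : Type*} [PseudoEMetricSpace X]

theorem ediam_union_le_of_inter_nonempty {C D E : Set X} (hCD : (C ∩ D).Nonempty)
    (hCE : (C ∩ E).Nonempty) :
    Metric.ediam (D ∪ E) ≤ Metric.ediam D + Metric.ediam C + Metric.ediam E := by
  obtain ⟨p, hpC, hpD⟩ := hCD
  obtain ⟨q, hqC, hqE⟩ := hCE
  calc Metric.ediam (D ∪ E)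
      ≤ Metric.ediam D + edist p q + Metric.ediam E := Metric.ediam_union_le_add_edist hpD hqE
    _ ≤ Metric.ediam D + Metric.ediam C + Metric.ediam E := by
      gcongr
      exact Metric.edist_le_ediam_of_mem hpC hqC

theorem ediam_sUnion_inter_nonempty_le (C : Set X) {𝒟 : Set (Set X)} {δ : ENNReal}
    (h𝒟 : ∀ D ∈ 𝒟, Metric.ediam D ≤ δ) :
    Metric.ediam (⋃₀ {D | D ∈ 𝒟 ∧ (C ∩ D).Nonempty}) ≤ Metric.ediam C + 2 * δ := by
  refine Metric.ediam_le ?_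
  rintro x ⟨D, ⟨hD, hCD⟩, hxD⟩ y ⟨E, ⟨hE, hCE⟩, hyE⟩
  calc edist x y
      ≤ Metric.ediam (D ∪ E) := Metric.edist_le_ediam_of_mem (.inl hxD) (.inr hyE)
    _ ≤ Metric.ediam D + Metric.ediam C + Metric.ediam E :=
      ediam_union_le_of_inter_nonempty hCD hCE
    _ ≤ δ + Metric.ediam C + δ := by
      gcongr
      exacts [h𝒟 D hD, h𝒟 E hE]
    _ = Metric.ediam C + 2 * δ := by ring

theorem clustering_stability_general {C : Set X} {𝒟 : Set (Set X)} {δ : ENNReal}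
    (hC : Metric.ediam C ≤ δ) (h𝒟 : ∀ D ∈ 𝒟, Metric.ediam D ≤ δ) :
    Metric.ediam (⋃₀ {D | D ∈ 𝒟 ∧ (C ∩ D).Nonempty}) ≤ 3 * δ :=
  calc Metric.ediam (⋃₀ {D | D ∈ 𝒟 ∧ (C ∩ D).Nonempty})
      ≤ Metric.ediam C + 2 * δ := ediam_sUnion_inter_nonempty_le C h𝒟
    _ ≤ δ + 2 * δ := by gcongr
    _ = 3 * δ := by ring

end PseudoEMetricSpace

/-- **Clustering stability.** If `𝒞` and `𝒟` are two partitions of `S ⊆ X` all of whose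
blocks have diameter at most `δ`, then for every block `C` of `𝒞`, the union of all blocks
of `𝒟` meeting `C` has diameter at most `3δ`. -/
theorem clustering_stability {X : Type*} [MetricSpace X] (S : Set X)
    (𝒞 𝒟 : Set (Set X)) (δ : ℝ) (hδ : 0 ≤ δ)
    (h𝒞 : IsPartitionOf S 𝒞) (h𝒟 : IsPartitionOf S 𝒟)
    (h𝒞diam : ∀ A ∈ 𝒞, EMetric.diam A ≤ ENNReal.ofReal δ)
    (h𝒟diam : ∀ A ∈ 𝒟, EMetric.diam A ≤ ENNReal.ofReal δ)
    (C : Set X) (hC : C ∈ 𝒞) :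
    EMetric.diam (⋃₀ {D | D ∈ 𝒟 ∧ (C ∩ D).Nonempty}) ≤ ENNReal.ofReal (3 * δ) := by
  rw [ENNReal.ofReal_mul zero_le_three, ENNReal.ofReal_ofNat]
  exact clustering_stability_general (h𝒞diam C hC) h𝒟diam
end

section
/- Let (X, d) be a metric space and let C, D₁, D₂ be finite nonempty subsets of X, each of diameter at most δ (for some δ ≥ 0). If C ∩ D₁ ≠ ∅ and C ∩ D₂ ≠ ∅, then the average pairwise distance avg(D₁, D₂) = (1 / (|D₁| · |D₂|)) · Σ_{x ∈ D₁} Σ_{y ∈ D₂} d(x, y) is at most 3δ. -/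
/-- The average distance `avg(A, B)` between two finite sets. As `x / 0 = 0`, it is `0` when `A` or
`B` is empty. -/
noncomputable def avgDist {X : Type*} [PseudoMetricSpace X] (A B : Finset X) : ℝ :=
  (∑ x ∈ A, ∑ y ∈ B, dist x y) / ((A.card : ℝ) * (B.card : ℝ))

section

variable {X : Type*} [PseudoMetricSpace X]

theorem avgDist_le {A B : Finset X} {r : ℝ} (hr : 0 ≤ r)
    (h : ∀ x ∈ A, ∀ y ∈ B, dist x y ≤ r) : avgDist A B ≤ r := by
  refine div_le_of_le_mul₀ (by positivity) hr ?_
  calc ∑ x ∈ A, ∑ y ∈ B, dist x y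
      ≤ ∑ _x ∈ A, ∑ _y ∈ B, r :=
        Finset.sum_le_sum fun x hx => Finset.sum_le_sum fun y hy => h x hx y hy
    _ = r * (A.card * B.card) := by
        simp only [Finset.sum_const, nsmul_eq_mul]
        ring

theorem avgDist_le_diam {A B : Finset X} {S : Set X} (hS : Bornology.IsBounded S)
    (hA : (A : Set X) ⊆ S) (hB : (B : Set X) ⊆ S) : avgDist A B ≤ Metric.diam S :=
  avgDist_le Metric.diam_nonneg fun _ hx _ hy => Metric.dist_le_diam_of_mem hS (hA hx) (hB hy)

theorem diam_union_union_le {A B C : Set X} (hCA : (C ∩ A).Nonempty) (hCB : (C ∩ B).Nonempty) :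
    Metric.diam (C ∪ A ∪ B) ≤ Metric.diam C + Metric.diam A + Metric.diam B := by
  have hCAB : ((C ∪ A) ∩ B).Nonempty :=
    hCB.mono (Set.inter_subset_inter_left B Set.subset_union_left)
  calc Metric.diam (C ∪ A ∪ B)
      ≤ Metric.diam (C ∪ A) + Metric.diam B := Metric.diam_union' hCAB
    _ ≤ Metric.diam C + Metric.diam A + Metric.diam B := by
        gcongr
        exact Metric.diam_union' hCA

theorem clusterGraph_stability_avg_general {C : Set X} {D₁ D₂ : Finset X}
    (hC : Bornology.IsBounded C) (hCD₁ : (C ∩ D₁).Nonempty) (hCD₂ : (C ∩ D₂).Nonempty) :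
    avgDist D₁ D₂ ≤ Metric.diam C + Metric.diam (D₁ : Set X) + Metric.diam (D₂ : Set X) := by
  have hbdd : Bornology.IsBounded (C ∪ D₁ ∪ D₂) :=
    (hC.union D₁.finite_toSet.isBounded).union D₂.finite_toSet.isBounded
  have hD₁ : (D₁ : Set X) ⊆ C ∪ D₁ ∪ D₂ := Set.subset_union_right.trans Set.subset_union_left
  exact (avgDist_le_diam hbdd hD₁ Set.subset_union_right).trans (diam_union_union_le hCD₁ hCD₂)

end

/-- **ClusterGraph stability, average-distance case.** If `C`, `D₁`, `D₂` are finite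
nonempty subsets of a metric space, each of diameter at most `δ`, and `C` meets both `D₁`
and `D₂`, then the average pairwise distance between `D₁` and `D₂` is at most `3δ`. -/
theorem clusterGraph_stability_avg {X : Type*} [MetricSpace X] [DecidableEq X]
    (C D₁ D₂ : Finset X) (δ : ℝ) (hδ : 0 ≤ δ)
    (hCne : C.Nonempty) (hD₁ne : D₁.Nonempty) (hD₂ne : D₂.Nonempty)
    (hC : EMetric.diam (C : Set X) ≤ ENNReal.ofReal δ)
    (hD₁ : EMetric.diam (D₁ : Set X) ≤ ENNReal.ofReal δ)
    (hD₂ : EMetric.diam (D₂ : Set X) ≤ ENNReal.ofReal δ)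
    (hCD₁ : (C ∩ D₁).Nonempty) (hCD₂ : (C ∩ D₂).Nonempty) :
    (∑ x ∈ D₁, ∑ y ∈ D₂, dist x y) / ((D₁.card : ℝ) * (D₂.card : ℝ)) ≤ 3 * δ := by
  have havg := clusterGraph_stability_avg_general C.finite_toSet.isBounded
    (by exact_mod_cast hCD₁) (by exact_mod_cast hCD₂)
  have hdiam {S : Set X} : Metric.ediam S ≤ ENNReal.ofReal δ → Metric.diam S ≤ δ :=
    ENNReal.toReal_le_of_le_ofReal hδ
  exact havg.trans (by linarith only [hdiam hC, hdiam hD₁, hdiam hD₂])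
end
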